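/- Let X be a standard Borel space, E a countable Borel equivalence relation on X, ρ : E → (0,∞) a Borel cocycle, f, g : X → [0,∞) Borel functions, and r > 1. Then there exist an E-invariant Borel set B ⊆ X, a Borel set C ⊆ B, and a finite Borel subequivalence relation F of E restricted to B such that ρ restricted to E restricted to the complement of B is smooth and ∫_C f dμ^ρ_{[x]_F} ≤ ∫_{B∖C} g dμ^ρ_{[x]_F} ≤ r·∫_C f dμ^ρ_{[x]_F} for all x ∈ B. -/

import Mathlib

open MeasureTheory Set ENNReal

namespace CocycleNadkarni

variable {X : Type*} {Γ : Type*}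

/-- The `ρ`-size of `Y` relative to the point `z`: `∑_{y ∈ Y} ρ(y, z)`. -/
noncomputable def eSize (ρ : X → X → ℝ) (Y : Set X) (z : X) : ℝ≥0∞ :=
  ∑' y : Y, ENNReal.ofReal (ρ y z)

/-- The `ρ`-size of `Y` relative to the set `Z`, computed at the point `z`. -/
noncomputable def relSize (ρ : X → X → ℝ) (Y Z : Set X) (z : X) : ℝ≥0∞ :=
  eSize ρ Y z / eSize ρ Z z

/-- Real-valued `ρ`-size (used for finite sets). -/
noncomputable def rSize (ρ : X → X → ℝ) (Y : Set X) (z : X) : ℝ :=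
  ∑' y : Y, ρ y z

/-- `∫_C f dμ^ρ_S`, computed at the point `z`. -/
noncomputable def avgOn (ρ : X → X → ℝ) (f : X → ℝ) (S C : Set X) (z : X) : ℝ :=
  (∑' y : ↥(S ∩ C), f y * ρ y z) / rSize ρ S z

/-- countable Borel equivalence relation -/
def IsCBER [MeasurableSpace X] (E : X → X → Prop) : Prop :=
  Equivalence E ∧ MeasurableSet {p : X × X | E p.1 p.2} ∧ ∀ x : X, {y | E x y}.Countable

/-- Borel cocycle `ρ : E → (0, ∞)` (as a total function whose values off `E` are irrelevant). -/
def IsCocycle [MeasurableSpace X] (E : X → X → Prop) (ρ : X → X → ℝ) : Prop :=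
  Measurable (fun p : X × X => ρ p.1 p.2) ∧
    (∀ ⦃x y : X⦄, E x y → 0 < ρ x y) ∧
    ∀ ⦃x y z : X⦄, E x y → E y z → ρ x z = ρ x y * ρ y z

/-- Borel cocycle into a group `Γ`. -/
def IsGrpCocycle [MeasurableSpace X] [Group Γ] [MeasurableSpace Γ]
    (E : X → X → Prop) (ρ : X → X → Γ) : Prop :=
  Measurable (fun p : X × X => ρ p.1 p.2) ∧
    ∀ ⦃x y z : X⦄, E x y → E y z → ρ x z = ρ x y * ρ y z

/-- finite Borel subequivalence relation of `E` -/
def IsFinSubequiv [MeasurableSpace X] (E F : X → X → Prop) : Prop :=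
  Equivalence F ∧ MeasurableSet {p : X × X | F p.1 p.2} ∧
    (∀ ⦃x y : X⦄, F x y → E x y) ∧ ∀ x : X, {y | F x y}.Finite

/-- finite Borel subequivalence relation of `E` restricted to `W` (extended by the diagonal). -/
def IsFinSubequivOn [MeasurableSpace X] (E : X → X → Prop) (W : Set X)
    (F : X → X → Prop) : Prop :=
  Equivalence F ∧ MeasurableSet {p : X × X | F p.1 p.2} ∧
    (∀ ⦃x y : X⦄, F x y → x = y ∨ (E x y ∧ x ∈ W ∧ y ∈ W)) ∧ ∀ x : X, {y | F x y}.Finite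

/-- `ρ`-invariance of a Borel measure. -/
def IsInvariant [MeasurableSpace X] (E : X → X → Prop) (ρ : X → X → ℝ)
    (μ : Measure X) : Prop :=
  ∀ T : X ≃ᵐ X, (∀ x, E (T x) x) → ∀ B : Set X, MeasurableSet B →
    μ (T '' B) = ∫⁻ x in B, ENNReal.ofReal (ρ (T x) x) ∂μ

/-- invariance w.r.t. the restriction of `ρ` to a set `R` of pairs, via Borel injections
whose graphs are contained in `R⁻¹`. -/
def IsInvariantRel [MeasurableSpace X] (R : Set (X × X)) (ρ : X → X → ℝ)
    (μ : Measure X) : Prop :=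
  ∀ (B : Set X) (T : X → X), MeasurableSet B → Measurable T → Set.InjOn T B →
    (∀ x ∈ B, ((T x, x) : X × X) ∈ R) →
    μ (T '' B) = ∫⁻ x in B, ENNReal.ofReal (ρ (T x) x) ∂μ

/-- a Borel ℕ-coloring of the lacunarity digraph `G^ρ_Z`. -/
def HasColoring [MeasurableSpace X] (E : X → X → Prop) (ρ : X → X → Γ)
    (Z : Set Γ) : Prop :=
  ∃ c : X → ℕ, Measurable c ∧
    ∀ ⦃x y : X⦄, x ≠ y → E x y → ρ x y ∈ Z → c x ≠ c y

/-- smoothness of the cocycle `ρ` restricted to `E` restricted to `W`. -/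
def SmoothOn [MeasurableSpace X] (E : X → X → Prop) (ρ : X → X → ℝ)
    (W : Set X) : Prop :=
  ∃ U : Set ℝ, IsOpen U ∧ (1:ℝ) ∈ U ∧ U ⊆ Set.Ioi 0 ∧
    ∃ c : X → ℕ, Measurable c ∧
      ∀ ⦃x y : X⦄, x ∈ W → y ∈ W → x ≠ y → E x y → ρ x y ∈ U → c x ≠ c y

/-- smoothness of the cocycle `ρ` on `E`. -/
def Smooth [MeasurableSpace X] (E : X → X → Prop) (ρ : X → X → ℝ) : Prop :=
  SmoothOn E ρ Set.univ

/-- `E`-invariance of a set. -/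
def EInvariant (E : X → X → Prop) (B : Set X) : Prop :=
  ∀ ⦃x y : X⦄, E x y → x ∈ B → y ∈ B

/-- a compression of `ρ` over the finite subequivalence relation `F` of `E`. -/
def CompressionOver [MeasurableSpace X] (E F : X → X → Prop) (ρ : X → X → ℝ)
    (φ : X → X) : Prop :=
  (∀ x, E x (φ x)) ∧
  (∀ x : X, relSize ρ (φ ⁻¹' {y | F y x}) {y | F y x} x ≤ 1) ∧
  (∀ x : X, ∃ y, E x y ∧ relSize ρ (φ ⁻¹' {z | F z y}) {z | F z y} y < 1)

/-- a compression of the quotient of `ρ | E | W` by the finite subequivalence relation given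
by the setoid `s`, expressed via representatives. -/
def QuotCompressionOn [MeasurableSpace X] (E : X → X → Prop) (ρ : X → X → ℝ)
    (W : Set X) (s : Setoid X) (φ : Quotient s → Quotient s) : Prop :=
  (∀ ⦃x : X⦄, x ∈ W → ∀ y : X, φ (Quotient.mk s x) = Quotient.mk s y → (E x y ∧ y ∈ W)) ∧
  (∀ ⦃x : X⦄, x ∈ W →
    relSize ρ {y | y ∈ W ∧ φ (Quotient.mk s y) = Quotient.mk s x} {y | s.r y x} x ≤ 1) ∧
  (∀ ⦃x : X⦄, x ∈ W → ∃ y, y ∈ W ∧ E x y ∧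
    relSize ρ {z | z ∈ W ∧ φ (Quotient.mk s z) = Quotient.mk s y} {z | s.r z y} y < 1)


/-- `B` has `ρ`-density at least `ε` relative to `W`. -/
def HasDensityAtLeastOn [MeasurableSpace X] (E : X → X → Prop) (ρ : X → X → ℝ)
    (B W : Set X) (ε : ℝ) : Prop :=
  ∃ F : X → X → Prop, IsFinSubequivOn E W F ∧
    ∀ x ∈ W, ENNReal.ofReal ε ≤ relSize ρ (B ∩ {y | F y x}) {y | F y x} x

/-- `B` has positive `ρ`-density relative to `W`. -/
def HasPosDensityOn [MeasurableSpace X] (E : X → X → Prop) (ρ : X → X → ℝ)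
    (B W : Set X) : Prop :=
  ∃ ε : ℝ, 0 < ε ∧ HasDensityAtLeastOn E ρ B W ε

/-- `B` has σ-positive `ρ`-density relative to `W`. -/
def HasSigmaPosDensityOn [MeasurableSpace X] (E : X → X → Prop) (ρ : X → X → ℝ)
    (B W : Set X) : Prop :=
  ∃ A : ℕ → Set X, (∀ n, MeasurableSet (A n)) ∧ (∀ n, A n ⊆ W) ∧
    (∀ n, ∀ x ∈ A n, ∀ y ∈ W, E x y → y ∈ A n) ∧ W = ⋃ n, A n ∧
    ∀ n, HasPosDensityOn E ρ (B ∩ A n) (A n)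

/-!
Call two disjoint finite subsets `C`, `D` of an `E`-class, not both empty, balanced if
`∫_C f ≤ ∫_D g ≤ r * ∫_C f` for the measure given by `ρ`. By the Lusin–Novikov theorem the balanced
pairs form a standard Borel space in which every point of `X` is covered by countably many pairs,
so there is a maximal Borel family of pairwise disjoint balanced pairs. Let `Y` be the set of points
it leaves uncovered and `B` the complement of the `E`-saturation of `Y`; the pairs contained in `B`
are the classes of `F`, and `C` is the union of their left halves.

Since `Y` contains no balanced pair, `f` and `g` are positive on `Y`. Cut `Y` into countably many
pieces on each of which `f` and `g` are nearly constant. Infinitely many points of such a piece at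
nearly the same `ρ`-level would contain a balanced pair, the cardinalities of `C` and `D` being
chosen with ratio close to that of the values of `f` and `g`. So the lacunarity graph is locally
finite on each piece, hence has a Borel `ℕ`-coloring, and smoothness passes from `Y` to its
saturation.
-/

section LusinNovikov

open Topology Filter

variable {ι κ P Q : Type*} {π : P → Q}

/-- `W` is covered by countably many Borel sets on which `π` is injective. These sets form the
`σ`-ideal of exceptional sets in the proof of the Lusin–Novikov theorem. -/
def SigmaInjOn [MeasurableSpace P] (π : P → Q) (W : Set P) : Prop :=
  ∃ Z : ℕ → Set P, (∀ n, MeasurableSet (Z n)) ∧ (∀ n, InjOn π (Z n)) ∧ W ⊆ ⋃ n, Z n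

/-- However a `σ`-injective set is removed from the sets `N i`, some fibre of `π` still meets all
of them. -/
def Entangled [MeasurableSpace P] (π : P → Q) (N : ι → Set P) : Prop :=
  ∀ Z, SigmaInjOn π Z → ∃ x, ∀ i, ((N i \ Z) ∩ π ⁻¹' {x}).Nonempty

section Ideal

variable [MeasurableSpace P]

lemma sigmaInjOn_of_injOn {Z : Set P} (hZ : MeasurableSet Z) (hinj : InjOn π Z) :
    SigmaInjOn π Z :=
  ⟨fun _ => Z, fun _ => hZ, fun _ => hinj, subset_iUnion (fun _ : ℕ => Z) 0⟩

lemma sigmaInjOn_empty : SigmaInjOn π ∅ := sigmaInjOn_of_injOn MeasurableSet.empty (injOn_empty π)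

lemma SigmaInjOn.mono {V W : Set P} (hW : SigmaInjOn π W) (hVW : V ⊆ W) : SigmaInjOn π V := by
  obtain ⟨Z, hZ, hinj, hcover⟩ := hW
  exact ⟨Z, hZ, hinj, hVW.trans hcover⟩

lemma SigmaInjOn.iUnion [Countable ι] {W : ι → Set P} (hW : ∀ i, SigmaInjOn π (W i)) :
    SigmaInjOn π (⋃ i, W i) := by
  choose Z hZ hinj hcover using hW
  cases isEmpty_or_nonempty ι
  · simpa using sigmaInjOn_empty
  obtain ⟨u, hu⟩ := exists_surjective_nat (ι × ℕ)
  refine ⟨fun n => Z (u n).1 (u n).2, fun n => hZ _ _, fun n => hinj _ _, ?_⟩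
  rw [hu.iUnion_comp fun q => Z q.1 q.2]
  refine iUnion_subset fun i => (hcover i).trans (iUnion_subset fun n => ?_)
  exact subset_iUnion (fun q : ι × ℕ => Z q.1 q.2) (i, n)

lemma SigmaInjOn.union {V W : Set P} (hV : SigmaInjOn π V) (hW : SigmaInjOn π W) :
    SigmaInjOn π (V ∪ W) := by
  rw [union_eq_iUnion]
  exact SigmaInjOn.iUnion (Bool.forall_bool.2 ⟨hW, hV⟩)

lemma SigmaInjOn.exists_measurableSet_superset {W : Set P} (hW : SigmaInjOn π W) :
    ∃ V, MeasurableSet V ∧ SigmaInjOn π V ∧ W ⊆ V := by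
  obtain ⟨Z, hZ, hinj, hcover⟩ := hW
  exact ⟨_, MeasurableSet.iUnion hZ, ⟨Z, hZ, hinj, subset_rfl⟩, hcover⟩

lemma Entangled.mono {M N : ι → Set P} (hM : Entangled π M) (h : ∀ i, M i ⊆ N i) :
    Entangled π N := fun Z hZ =>
  (hM Z hZ).imp fun _ hx i =>
    (hx i).mono (inter_subset_inter_left _ (sdiff_subset_sdiff_left (h i)))

lemma Entangled.comp {N : ι → Set P} (hN : Entangled π N) (u : κ → ι) : Entangled π (N ∘ u) :=
  fun Z hZ => (hN Z hZ).imp fun _ hx k => hx (u k)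

lemma entangled_univ_of_not_sigmaInjOn (h : ¬ SigmaInjOn π univ) :
    Entangled π fun _ : ι => (univ : Set P) := by
  intro Z hZ
  obtain ⟨p, hp⟩ : ∃ p, p ∉ Z := by
    by_contra! hall
    exact h (hZ.mono fun p _ => hall p)
  exact ⟨π p, fun _ => ⟨p, ⟨mem_univ p, hp⟩, rfl⟩⟩

lemma exists_entangled_nhds [TopologicalSpace P] [SecondCountableTopology P] [Finite κ]
    {R : Set (κ → P)}
    (hR : ∀ Z, SigmaInjOn π Z → ∃ a ∈ R, ∃ x, ∀ k, a k ∉ Z ∧ π (a k) = x) :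
    ∃ a ∈ R, ∀ U : κ → Set P, (∀ k, U k ∈ 𝓝 (a k)) → Entangled π U := by
  let 𝓑 := TopologicalSpace.countableBasis P
  have h𝓑 : TopologicalSpace.IsTopologicalBasis 𝓑 := TopologicalSpace.isBasis_countableBasis P
  have : Countable 𝓑 := (TopologicalSpace.countable_countableBasis P).to_subtype
  have hbad : ∀ V : κ → 𝓑, ∃ Z, SigmaInjOn π Z ∧
      ((∃ x, ∀ k, (((V k : Set P) \ Z) ∩ π ⁻¹' {x}).Nonempty) →
        Entangled π fun k => (V k : Set P)) := by
    intro V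
    by_cases hV : Entangled π fun k => (V k : Set P)
    · exact ⟨∅, sigmaInjOn_empty, fun _ => hV⟩
    · unfold Entangled at hV
      push Not at hV
      obtain ⟨Z, hZ, hVZ⟩ := hV
      refine ⟨Z, hZ, fun ⟨x, hx⟩ => ?_⟩
      obtain ⟨k, hk⟩ := hVZ x
      exact absurd hk (hx k).ne_empty
  choose Z hZ hZV using hbad
  obtain ⟨a, haR, x, ha⟩ := hR _ (SigmaInjOn.iUnion hZ)
  refine ⟨a, haR, fun U hU => ?_⟩
  choose V hV𝓑 haV hVU using fun k => h𝓑.mem_nhds_iff.1 (hU k)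
  refine (hZV (fun k => ⟨V k, hV𝓑 k⟩) ⟨x, fun k => ?_⟩).mono hVU
  exact ⟨a k, ⟨haV k, fun h => (ha k).1 (mem_iUnion_of_mem _ h)⟩, (ha k).2⟩

end Ideal

section Analytic

lemma analyticSet_inter [TopologicalSpace P] [T2Space P] {S T : Set P} (hS : AnalyticSet S)
    (hT : AnalyticSet T) : AnalyticSet (S ∩ T) := by
  rw [inter_eq_iInter]
  exact AnalyticSet.iInter (Bool.forall_bool.2 ⟨hT, hS⟩)

variable [TopologicalSpace P] [PolishSpace P] [MeasurableSpace P] [BorelSpace P]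

lemma analyticSet_exists_mem_rel {S : Set P} (hS : AnalyticSet S) {R : Set (P × P)}
    (hR : MeasurableSet R) : AnalyticSet {p | ∃ q ∈ S, (q, p) ∈ R} := by
  have hinter : AnalyticSet (Prod.fst ⁻¹' S ∩ R) :=
    analyticSet_inter (hS.preimage continuous_fst) hR.analyticSet
  convert hinter.image_of_continuous continuous_snd using 1
  ext p
  constructor
  · rintro ⟨q, hq, h⟩
    exact ⟨(q, p), ⟨hq, h⟩, rfl⟩
  · rintro ⟨⟨q, _⟩, ⟨hq, h⟩, rfl⟩
    exact ⟨q, hq, h⟩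

variable [TopologicalSpace Q] [T2Space Q]

lemma analyticSet_inter_fiber_nonempty (hπ : Continuous π) {S : Set P} (hS : AnalyticSet S) :
    AnalyticSet {p | (S ∩ π ⁻¹' {π p}).Nonempty} :=
  analyticSet_exists_mem_rel hS (R := {w | π w.1 = π w.2})
    (isClosed_eq (hπ.comp continuous_fst) (hπ.comp continuous_snd)).measurableSet

lemma analyticSet_exists_fiber_ne (hπ : Continuous π) {S : Set P} (hS : AnalyticSet S) :
    AnalyticSet {p | ∃ q ∈ S, π q = π p ∧ q ≠ p} :=
  analyticSet_exists_mem_rel hS (R := {w | π w.1 = π w.2 ∧ w.1 ≠ w.2})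
    ((isClosed_eq (hπ.comp continuous_fst) (hπ.comp continuous_snd)).measurableSet.inter
      (isClosed_eq continuous_fst continuous_snd).measurableSet.compl)

/- Separating `A` from the points sharing a fibre with another point of `A` gives `V`; separating
`A` from the points sharing a fibre with another point of `V` makes `V` injective. -/
lemma exists_measurableSet_superset_injOn (hπ : Continuous π) {A : Set P}
    (hA : AnalyticSet A) (hinj : InjOn π A) :
    ∃ Z, MeasurableSet Z ∧ InjOn π Z ∧ A ⊆ Z := by
  obtain ⟨V, hAV, hVdisj, hV⟩ := hA.measurablySeparable (analyticSet_exists_fiber_ne hπ hA)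
    (disjoint_left.2 fun p hp ⟨q, hq, h, hne⟩ => hne (hinj hq hp h))
  obtain ⟨W, hAW, hWdisj, hW⟩ := hA.measurablySeparable
    (analyticSet_exists_fiber_ne hπ hV.analyticSet)
    (disjoint_left.2 fun p hp ⟨q, hq, h, hne⟩ =>
      disjoint_left.1 hVdisj ⟨p, hp, h.symm, hne.symm⟩ hq)
  refine ⟨V ∩ W, hV.inter hW, fun p hp q hq h => ?_, subset_inter hAV hAW⟩
  by_contra hne
  exact disjoint_left.1 hWdisj ⟨p, hp.1, h, hne⟩ hq.2

lemma analyticSet_inter_fiber_nontrivial (hπ : Continuous π) {S : Set P} (hS : AnalyticSet S) :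
    AnalyticSet {p | (S ∩ π ⁻¹' {π p}).Nontrivial} := by
  have hneigh : AnalyticSet (S ∩ {q | ∃ q' ∈ S, π q' = π q ∧ q' ≠ q}) :=
    analyticSet_inter hS (analyticSet_exists_fiber_ne hπ hS)
  convert analyticSet_inter_fiber_nonempty hπ hneigh using 1
  ext p
  constructor
  · rintro ⟨q, ⟨hq, hqp⟩, q', ⟨hq', hqp'⟩, hne⟩
    exact ⟨q, ⟨hq, q', hq', hqp'.trans hqp.symm, hne.symm⟩, hqp⟩
  · rintro ⟨q, ⟨hq, q', hq', hqq', hne⟩, hqp⟩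
    exact ⟨q, ⟨hq, hqp⟩, q', ⟨hq', hqq'.trans hqp⟩, hne.symm⟩

lemma analyticSet_forall_inter_fiber [Countable ι] [Nonempty ι] (hπ : Continuous π) {N : ι → Set P}
    (hN : ∀ i, AnalyticSet (N i)) (T : Set ι) :
    AnalyticSet {p | ∀ i, (N i ∩ π ⁻¹' {π p}).Nonempty ∧
      (i ∈ T → (N i ∩ π ⁻¹' {π p}).Nontrivial)} := by
  rw [ofPred_forall]
  refine AnalyticSet.iInter fun i => ?_
  by_cases hi : i ∈ T
  · simpa only [hi, forall_const, and_iff_right_of_imp Set.Nontrivial.nonempty]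
      using analyticSet_inter_fiber_nontrivial hπ (hN i)
  · simpa only [hi, false_imp_iff, and_true] using analyticSet_inter_fiber_nonempty hπ (hN i)

lemma Entangled.exists_nontrivial_of_mem [Countable ι] (hπ : Continuous π) {N : ι → Set P}
    (hN : Entangled π N) (hNm : ∀ i, MeasurableSet (N i)) (T : Finset ι) {Z : Set P}
    (hZ : SigmaInjOn π Z) :
    ∃ x, ∀ i, ((N i \ Z) ∩ π ⁻¹' {x}).Nonempty ∧
      (i ∈ T → ((N i \ Z) ∩ π ⁻¹' {x}).Nontrivial) := by
  classical
  induction T using Finset.induction generalizing Z with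
  | empty => exact (hN Z hZ).imp fun x hx i => ⟨hx i, fun hi => absurd hi (Finset.notMem_empty i)⟩
  | insert s T _ ih =>
    obtain ⟨Y, hYm, hY, hZY⟩ := hZ.exists_measurableSet_superset
    have hNY : ∀ i, AnalyticSet (N i \ Y) := fun i => ((hNm i).diff hYm).analyticSet
    by_contra! hcon
    let A : Set P := {p | p ∈ N s \ Y ∧ ∀ i, ((N i \ Y) ∩ π ⁻¹' {π p}).Nonempty ∧
      (i ∈ T → ((N i \ Y) ∩ π ⁻¹' {π p}).Nontrivial)}
    have : Nonempty ι := ⟨s⟩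
    have hA : AnalyticSet A := analyticSet_inter (hNY s) (analyticSet_forall_inter_fiber hπ hNY T)
    have hAinj : InjOn π A := by
      intro p hp q hq hpq
      by_contra hne
      obtain ⟨i, hi⟩ := hcon (π p)
      have hmono : (N i \ Y) ∩ π ⁻¹' {π p} ⊆ (N i \ Z) ∩ π ⁻¹' {π p} :=
        inter_subset_inter_left _ (sdiff_subset_sdiff_right hZY)
      obtain ⟨his, hns⟩ := hi ((hp.2 i).1.mono hmono)
      obtain rfl | hiT := Finset.mem_insert.1 his
      · exact hns.not_nontrivial ⟨p, hmono ⟨hp.1, rfl⟩, q, hmono ⟨hq.1, hpq.symm⟩, hne⟩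
      · exact hns.not_nontrivial (((hp.2 i).2 hiT).mono hmono)
    obtain ⟨V, hVm, hVinj, hAV⟩ := exists_measurableSet_superset_injOn hπ hA hAinj
    obtain ⟨x, hx⟩ := ih (hY.union (sigmaInjOn_of_injOn hVm hVinj))
    have hsub : ∀ i, (N i \ (Y ∪ V)) ∩ π ⁻¹' {x} ⊆ (N i \ Y) ∩ π ⁻¹' {x} := fun i =>
      inter_subset_inter_left _ (sdiff_subset_sdiff_right subset_union_left)
    obtain ⟨p, ⟨hpN, hpYV⟩, rfl⟩ := (hx s).1
    exact hpYV (Or.inr (hAV ⟨⟨hpN, fun h => hpYV (Or.inl h)⟩, fun i =>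
      ⟨(hx i).1.mono (hsub i), fun hi => ((hx i).2 hi).mono (hsub i)⟩⟩))

lemma Entangled.exists_nontrivial [Finite ι] (hπ : Continuous π) {N : ι → Set P}
    (hN : Entangled π N) (hNm : ∀ i, MeasurableSet (N i)) {Z : Set P} (hZ : SigmaInjOn π Z) :
    ∃ x, ∀ i, ((N i \ Z) ∩ π ⁻¹' {x}).Nontrivial := by
  cases nonempty_fintype ι
  obtain ⟨x, hx⟩ := hN.exists_nontrivial_of_mem hπ hNm Finset.univ hZ
  exact ⟨x, fun i => (hx i).2 (Finset.mem_univ i)⟩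

end Analytic

section CantorScheme

variable [MetricSpace P]

lemma tendsto_of_mem_cantorScheme {β : Type*} {A : List β → Set P}
    (hA : CantorScheme.VanishingDiam A) {α : ℕ → β} {p : ℕ → P} {q : P}
    (hp : ∀ n, p n ∈ A (PiNat.res α n)) (hq : ∀ n, q ∈ A (PiNat.res α n)) :
    Tendsto p atTop (𝓝 q) := by
  rw [tendsto_iff_edist_tendsto_0]
  exact tendsto_of_tendsto_of_tendsto_of_le_of_le tendsto_const_nhds (hA α)
    (fun _ => zero_le) fun n => Metric.edist_le_ediam_of_mem (hp n) (hq n)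

lemma exists_ball_separation [Finite ι] {N : ι → Set P} (hN : ∀ i, IsOpen (N i))
    {a : ι × Bool → P} (ha : ∀ j, a j ∈ N j.1) (hne : ∀ i, a (i, true) ≠ a (i, false))
    {ε : ℝ} (hε : 0 < ε) :
    ∃ δ > 0, δ ≤ ε ∧ (∀ j, Metric.closedBall (a j) δ ⊆ N j.1) ∧
      ∀ i, Disjoint (Metric.ball (a (i, true)) δ) (Metric.ball (a (i, false)) δ) := by
  have hsub : ∀ᶠ δ in 𝓝[>] (0 : ℝ), ∀ j, Metric.closedBall (a j) δ ⊆ N j.1 := by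
    refine eventually_all.2 fun j => nhdsWithin_le_nhds ?_
    exact eventually_closedBall_subset ((hN j.1).mem_nhds (ha j))
  have hdisj : ∀ᶠ δ in 𝓝[>] (0 : ℝ), ∀ i,
      Disjoint (Metric.ball (a (i, true)) δ) (Metric.ball (a (i, false)) δ) := by
    refine eventually_all.2 fun i => ?_
    have hd : 0 < dist (a (i, true)) (a (i, false)) / 2 := half_pos (dist_pos.2 (hne i))
    filter_upwards [Ioc_mem_nhdsGT hd] with δ hδ
    exact Metric.ball_disjoint_ball (by linarith [hδ.2])
  obtain ⟨δ, hδ, hδε, hδ0⟩ :=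
    ((hsub.and hdisj).and ((Ioc_mem_nhdsGT hε : ∀ᶠ δ in 𝓝[>] (0 : ℝ), δ ∈ Ioc 0 ε))).exists
  exact ⟨δ, hδε, hδ0, hδ⟩

variable [SecondCountableTopology P] [CompleteSpace P] [MeasurableSpace P] [BorelSpace P]
  [TopologicalSpace Q] [T2Space Q]

lemma Entangled.exists_split [Finite ι] (hπ : Continuous π) {N : ι → Set P}
    (hN : Entangled π N) (hNo : ∀ i, IsOpen (N i)) {ε : ℝ} (hε : 0 < ε) :
    ∃ M : ι × Bool → Set P, Entangled π M ∧ (∀ j, IsOpen (M j)) ∧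
      (∀ j, closure (M j) ⊆ N j.1) ∧ (∀ i, Disjoint (M (i, true)) (M (i, false))) ∧
      ∀ j, Metric.ediam (M j) ≤ ENNReal.ofReal ε := by
  obtain ⟨a, ⟨haN, hane⟩, ha⟩ := exists_entangled_nhds (π := π)
    (R := {a : ι × Bool → P | (∀ j, a j ∈ N j.1) ∧ ∀ i, a (i, true) ≠ a (i, false)}) (by
      intro Z hZ
      obtain ⟨x, hx⟩ := hN.exists_nontrivial hπ (fun i => (hNo i).measurableSet) hZ
      choose p hp q hq hpq using hx
      refine ⟨fun j => cond j.2 (p j.1) (q j.1), ⟨?_, hpq⟩, x, ?_⟩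
      · rintro ⟨i, _ | _⟩
        exacts [(hq i).1.1, (hp i).1.1]
      · rintro ⟨i, _ | _⟩
        exacts [⟨(hq i).1.2, (hq i).2⟩, ⟨(hp i).1.2, (hp i).2⟩])
  obtain ⟨δ, hδ0, hδε, hδN, hδdisj⟩ := exists_ball_separation hNo haN hane (half_pos hε)
  refine ⟨fun j => Metric.ball (a j) δ, ha _ fun j => Metric.ball_mem_nhds _ hδ0,
    fun j => Metric.isOpen_ball, fun j => Metric.closure_ball_subset_closedBall.trans (hδN j),
    hδdisj, fun j => Metric.ediam_le fun u hu v hv => ?_⟩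
  rw [edist_dist]
  refine ENNReal.ofReal_le_ofReal ?_
  linarith [dist_triangle_right u v (a j), Metric.mem_ball.1 hu, Metric.mem_ball.1 hv]

lemma exists_entangled_cantorScheme (hπ : Continuous π) (h : ¬ SigmaInjOn π univ) :
    ∃ A : List Bool → Set P, CantorScheme.ClosureAntitone A ∧ CantorScheme.Disjoint A ∧
      CantorScheme.VanishingDiam A ∧ ∀ n, Entangled π fun v : List.Vector Bool n => A v.1 := by
  let Level (n : ℕ) := {N : List.Vector Bool n → Set P // Entangled π N ∧ ∀ v, IsOpen (N v)}
  have hsplit : ∀ n (N : Level n), ∃ M : Level (n + 1),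
      (∀ v b, closure (M.1 (b ::ᵥ v)) ⊆ N.1 v) ∧
      (∀ v, Disjoint (M.1 (true ::ᵥ v)) (M.1 (false ::ᵥ v))) ∧
      ∀ v, Metric.ediam (M.1 v) ≤ ENNReal.ofReal (1 / ((n : ℝ) + 1)) := by
    rintro n ⟨N, hN, hNo⟩
    obtain ⟨M, hM, hMo, hclosure, hdisj, hdiam⟩ := hN.exists_split hπ hNo Nat.one_div_pos_of_nat
    exact ⟨⟨fun v => M (v.tail, v.head), hM.comp _, fun v => hMo _⟩,
      fun v b => hclosure (v, b), fun v => hdisj v, fun v => hdiam _⟩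
  choose next hclosure hdisj hdiam using hsplit
  let S : ∀ n, Level n := fun n => n.rec
    ⟨fun _ => univ, entangled_univ_of_not_sigmaInjOn h, fun _ => isOpen_univ⟩ next
  let A : List Bool → Set P := fun l => (S l.length).1 ⟨l, rfl⟩
  have hAdiam : ∀ l b, Metric.ediam (A (b :: l)) ≤ ENNReal.ofReal (1 / ((l.length : ℝ) + 1)) :=
    fun l b => hdiam l.length (S l.length) ⟨b :: l, rfl⟩
  refine ⟨A, fun l b => hclosure l.length (S l.length) ⟨l, rfl⟩ b,
    fun l b c hbc => ?_, fun α => ?_, fun n => ?_⟩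
  · have := hdisj l.length (S l.length) ⟨l, rfl⟩
    cases b <;> cases c <;> first | exact absurd rfl hbc | exact this | exact this.symm
  · rw [← tendsto_add_atTop_iff_nat 1]
    have hlim : Tendsto (fun n : ℕ => ENNReal.ofReal (1 / ((n : ℝ) + 1))) atTop (𝓝 0) := by
      simpa using ENNReal.tendsto_ofReal (tendsto_one_div_add_atTop_nhds_zero_nat (𝕜 := ℝ))
    refine tendsto_of_tendsto_of_tendsto_of_le_of_le tendsto_const_nhds hlim (fun _ => zero_le)
      fun n => (hAdiam (PiNat.res α n) (α n)).trans_eq ?_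
    rw [PiNat.res_length]
  · convert (S n).2.1 with v
    obtain ⟨l, rfl⟩ := v
    rfl

theorem sigmaInjOn_univ_of_countable_fibers (hπ : Continuous π)
    (hcount : ∀ x, (π ⁻¹' {x}).Countable) : SigmaInjOn π univ := by
  by_contra h
  obtain ⟨A, hanti, hdisj, hdiam, hA⟩ := exists_entangled_cantorScheme hπ h
  have hex : ∀ n, ∃ x, ∀ v : List.Vector Bool n, ∃ p ∈ A v.1, π p = x := fun n =>
    (hA n ∅ sigmaInjOn_empty).imp fun x hx v =>
      let ⟨p, hp⟩ := hx v; ⟨p, hp.1.1, hp.2⟩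
  choose x p hpA hpx using hex
  have hdom : (CantorScheme.inducedMap A).1 = univ :=
    hanti.map_of_vanishingDiam hdiam fun l => ⟨_, hpA l.length ⟨l, rfl⟩⟩
  let φ : (ℕ → Bool) → P := fun α => (CantorScheme.inducedMap A).2 ⟨α, hdom ▸ mem_univ α⟩
  have hφA : ∀ α n, φ α ∈ A (PiNat.res α n) := fun α n => CantorScheme.map_mem _ n
  have hφinj : Function.Injective φ := fun α β hαβ =>
    congrArg Subtype.val (hdisj.map_injective hαβ)
  have hxφ : ∀ α, Tendsto x atTop (𝓝 (π (φ α))) := by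
    intro α
    have := (hπ.tendsto (φ α)).comp (tendsto_of_mem_cantorScheme hdiam
      (fun n => hpA n ⟨PiNat.res α n, PiNat.res_length α n⟩) (hφA α))
    exact this.congr fun n => hpx n _
  have hfiber : ∀ α, φ α ∈ π ⁻¹' {π (φ fun _ => true)} := fun α =>
    tendsto_nhds_unique (hxφ α) (hxφ _)
  have huniv : (univ : Set (ℕ → Bool)).Countable :=
    MapsTo.countable_of_injOn (fun α _ => hfiber α) hφinj.injOn (hcount _)
  have : Uncountable (ℕ → Bool) := by
    rw [← Cardinal.aleph0_lt_mk_iff]; simpa using Cardinal.aleph0_lt_continuum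
  exact not_countable_univ huniv

end CantorScheme

theorem sigmaInjOn_univ_of_measurable [MeasurableSpace P] [StandardBorelSpace P]
    [MeasurableSpace Q] [StandardBorelSpace Q] (hπ : Measurable π)
    (hcount : ∀ x, (π ⁻¹' {x}).Countable) : SigmaInjOn π univ := by
  let := upgradeStandardBorel Q
  obtain ⟨τ, hborel, hpolish⟩ := ‹StandardBorelSpace P›.polish
  obtain ⟨τ', hle, hcont, hpolish'⟩ := hπ.exists_continuous
  have : BorelSpace P :=
    ⟨hborel.measurable_eq.trans (borel_eq_borel_of_le hpolish' hpolish hle).symm⟩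
  let := TopologicalSpace.upgradeIsCompletelyMetrizable P
  exact sigmaInjOn_univ_of_countable_fibers hcont hcount

section Relation

variable {Y : Type*} [MeasurableSpace X] [StandardBorelSpace X] [MeasurableSpace Y]
  [StandardBorelSpace Y] {R : Set (Y × X)}

theorem exists_measurable_nat_injOn_section (hR : MeasurableSet R)
    (hcount : ∀ y, {x | (y, x) ∈ R}.Countable) :
    ∃ c : Y × X → ℕ, Measurable c ∧ ∀ y, InjOn (fun x => c (y, x)) {x | (y, x) ∈ R} := by
  classical
  have : StandardBorelSpace R := hR.standardBorel
  obtain ⟨Z, hZ, hinj, hcover⟩ := sigmaInjOn_univ_of_measurable (P := R) (π := fun w => w.1.1)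
    measurable_subtype_coe.fst fun y => by
      refine MapsTo.countable_of_injOn (f := fun w : R => w.1.2) ?_ ?_ (hcount y)
      · rintro ⟨⟨_, x⟩, hw⟩ rfl
        exact hw
      · rintro ⟨⟨_, x⟩, hw⟩ rfl ⟨⟨_, x'⟩, hw'⟩ h hx
        exact Subtype.ext (Prod.ext h.symm hx)
  have hex : ∀ w : R, ∃ n, w ∈ Z n := fun w => mem_iUnion.1 (hcover (mem_univ w))
  obtain ⟨c, hc, hcZ⟩ := (MeasurableEmbedding.subtype_coe hR).exists_measurable_extend
    (measurable_find hex hZ) fun _ => ⟨0⟩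
  have hmem : ∀ y x (h : (y, x) ∈ R), (⟨(y, x), h⟩ : R) ∈ Z (c (y, x)) := fun y x h => by
    rw [show c (y, x) = Nat.find (hex ⟨(y, x), h⟩) from congrFun hcZ ⟨(y, x), h⟩]
    exact Nat.find_spec (hex _)
  refine ⟨c, hc, fun y x hx x' hx' (hxx' : c (y, x) = c (y, x')) => ?_⟩
  have hmem' := hmem y x' hx'
  rw [← hxx'] at hmem'
  exact congrArg (fun w : R => w.1.2) (hinj _ (hmem y x hx) hmem' rfl)

theorem measurableSet_exists_of_countable (hR : MeasurableSet R)
    (hcount : ∀ y, {x | (y, x) ∈ R}.Countable) : MeasurableSet {y | ∃ x, (y, x) ∈ R} := by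
  obtain ⟨c, hc, hinj⟩ := exists_measurable_nat_injOn_section hR hcount
  have himage : ∀ n, MeasurableSet (Prod.fst '' (R ∩ c ⁻¹' {n})) := fun n => by
    refine (hR.inter (hc (measurableSet_singleton n))).image_of_measurable_injOn measurable_fst ?_
    rintro ⟨y, x⟩ ⟨hx, hn⟩ ⟨_, x'⟩ ⟨hx', hn'⟩ rfl
    exact congrArg (y, ·) (hinj y hx hx' (hn.trans hn'.symm))
  convert MeasurableSet.iUnion himage
  ext y
  simp

theorem exists_measurable_enumeration {E : X → X → Prop} (hE : IsCBER E) :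
    ∃ e : ℕ → X → X, (∀ n, Measurable (e n)) ∧ (∀ n x, E x (e n x)) ∧
      ∀ x y, E x y → ∃ n, e n x = y := by
  classical
  obtain ⟨hequiv, hEm, hcount⟩ := hE
  obtain ⟨c, hc, hinj⟩ := exists_measurable_nat_injOn_section hEm hcount
  have hpiece : ∀ n, ∃ u : X → X, Measurable u ∧ ∀ x y, E x y → c (x, y) = n → u x = y := by
    intro n
    have hG : MeasurableSet ({p : X × X | E p.1 p.2} ∩ c ⁻¹' {n}) :=
      hEm.inter (hc (measurableSet_singleton n))
    have : StandardBorelSpace ↥({p : X × X | E p.1 p.2} ∩ c ⁻¹' {n}) := hG.standardBorel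
    have hfst : MeasurableEmbedding
        fun w : ↥({p : X × X | E p.1 p.2} ∩ c ⁻¹' {n}) => w.1.1 := by
      refine measurable_subtype_coe.fst.measurableEmbedding ?_
      rintro ⟨⟨x, y⟩, hy, hn⟩ ⟨⟨_, y'⟩, hy', hn'⟩ rfl
      exact Subtype.ext (congrArg (x, ·) (hinj x hy hy' (hn.trans hn'.symm)))
    obtain ⟨u, hu, hufst⟩ :=
      hfst.exists_measurable_extend measurable_subtype_coe.snd fun x => ⟨x⟩
    exact ⟨u, hu, fun x y hxy hn => congrFun hufst ⟨(x, y), hxy, hn⟩⟩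
  choose u hu huc using hpiece
  refine ⟨fun n x => if E x (u n x) then u n x else x, fun n => ?_, fun n x => ?_,
    fun x y hxy => ?_⟩
  · exact Measurable.ite ((measurable_id.prodMk (hu n)) hEm) (hu n) measurable_id
  · dsimp only
    split_ifs with h
    exacts [h, hequiv.refl x]
  · have := huc _ x y hxy rfl
    exact ⟨c (x, y), by simp only [this, if_pos hxy]⟩

end Relation

end LusinNovikov

section Combinatorics

variable {K : Type*} [MeasurableSpace K] [StandardBorelSpace K]

lemma exists_measurableSet_seq_separating_finite :
    ∃ V : ℕ → Set K, (∀ n, MeasurableSet (V n)) ∧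
      ∀ x (S : Set K), S.Finite → x ∉ S → ∃ n, x ∈ V n ∧ Disjoint S (V n) := by
  let := upgradeStandardBorel K
  obtain ⟨V, hV⟩ := ((TopologicalSpace.countable_countableBasis K).insert ∅).exists_eq_range
    (insert_nonempty _ _)
  refine ⟨V, fun n => ?_, fun x S hS hx => ?_⟩
  · obtain hn | hn := (hV ▸ mem_range_self n : V n ∈ insert ∅ (TopologicalSpace.countableBasis K))
    · exact hn ▸ MeasurableSet.empty
    · exact (TopologicalSpace.isOpen_of_mem_countableBasis hn).measurableSet
  · obtain ⟨U, hU, hxU, hUS⟩ :=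
      (TopologicalSpace.isBasis_countableBasis K).exists_subset_of_mem_open
        (show x ∈ Sᶜ from hx) hS.isClosed.isOpen_compl
    obtain ⟨n, rfl⟩ := (hV ▸ mem_insert_of_mem _ hU : U ∈ range V)
    exact ⟨n, hxU, subset_compl_iff_disjoint_left.1 hUS⟩

theorem exists_measurable_nat_coloring {R : K → K → Prop}
    (hR : MeasurableSet {p : K × K | R p.1 p.2}) (hfin : ∀ x, {y | R x y}.Finite) :
    ∃ c : K → ℕ, Measurable c ∧ ∀ ⦃x y⦄, x ≠ y → R x y → c x ≠ c y := by
  classical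
  obtain ⟨V, hV, hsep⟩ := exists_measurableSet_seq_separating_finite (K := K)
  have hex : ∀ x, ∃ n, x ∈ V n ∧ Disjoint ({y | R x y} \ {x}) (V n) := fun x =>
    hsep x _ (hfin x).sdiff fun h => h.2 rfl
  have hm : ∀ n, MeasurableSet {x | x ∈ V n ∧ Disjoint ({y | R x y} \ {x}) (V n)} := by
    intro n
    have hbad : MeasurableSet {x | ∃ y, (x, y) ∈
        {p : K × K | R p.1 p.2} ∩ (Set.diagonal K)ᶜ ∩ Prod.snd ⁻¹' V n} :=
      measurableSet_exists_of_countable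
        ((hR.inter measurableSet_diagonal.compl).inter (measurable_snd (hV n)))
        fun x => (hfin x).countable.mono fun y hy => hy.1.1
    convert (hV n).inter hbad.compl using 1
    ext x
    simp [disjoint_left, eq_comm]
  refine ⟨fun x => Nat.find (hex x), measurable_find hex hm, fun x y hne hxy
    (hc : Nat.find (hex x) = Nat.find (hex y)) => ?_⟩
  have hx := (Nat.find_spec (hex x)).2
  have hy := (Nat.find_spec (hex y)).1
  exact disjoint_left.1 hx ⟨hxy, hne.symm⟩ (hc ▸ hy)

theorem exists_measurableSet_maximal_independent {R : K → K → Prop}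
    (hsymm : ∀ ⦃x y⦄, R x y → R y x) (hR : MeasurableSet {p : K × K | R p.1 p.2})
    (hcount : ∀ x, {y | R x y}.Countable)
    {c : K → ℕ} (hc : Measurable c) (hcR : ∀ ⦃x y⦄, x ≠ y → R x y → c x ≠ c y) :
    ∃ A, MeasurableSet A ∧ Maximal (fun A : Set K => A.Pairwise fun x y => ¬ R x y) A := by
  let A : ℕ → Set K := fun n => n.rec ∅ fun n B => B ∪ {x | c x = n ∧ ∀ y ∈ B, ¬ R x y}
  have hAsucc : ∀ n, A (n + 1) = A n ∪ {x | c x = n ∧ ∀ y ∈ A n, ¬ R x y} := fun _ => rfl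
  have hmem : ∀ n x, x ∈ A n ↔ c x < n ∧ ∀ y ∈ A (c x), ¬ R x y := by
    intro n x
    induction n with
    | zero => simp [A]
    | succ n ih =>
      simp only [hAsucc, mem_union, ih, mem_ofPred_eq, Nat.lt_succ_iff_lt_or_eq]
      grind
  have hmeas : ∀ n, MeasurableSet (A n) := by
    intro n
    induction n with
    | zero => exact MeasurableSet.empty
    | succ n ih =>
      have hnbr : MeasurableSet {x | ∃ y, (x, y) ∈ {p : K × K | R p.1 p.2} ∩ Prod.snd ⁻¹' A n} :=
        measurableSet_exists_of_countable (hR.inter (measurable_snd ih))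
          fun x => (hcount x).mono inter_subset_left
      convert ih.union ((hc (measurableSet_singleton n)).inter hnbr.compl) using 1
      rw [hAsucc]
      congr 1
      ext x
      simp [imp_not_comm]
  refine ⟨⋃ n, A n, MeasurableSet.iUnion hmeas,
    (maximal_iff_forall_insert fun S T hT hST => hT.mono hST).2 ⟨?_, fun x hx hins => ?_⟩⟩
  · have hlt : ∀ x y, x ∈ ⋃ n, A n → y ∈ ⋃ n, A n → c x < c y → ¬ R y x := by
      intro x y hx hy hxy
      obtain ⟨m, hm⟩ := mem_iUnion.1 hx
      obtain ⟨n, hn⟩ := mem_iUnion.1 hy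
      exact ((hmem n y).1 hn).2 x ((hmem _ x).2 ⟨hxy, ((hmem m x).1 hm).2⟩)
    intro x hx y hy hne hxy
    obtain h | h := (hcR hne hxy).lt_or_gt
    exacts [hlt x y hx hy h (hsymm hxy), hlt y x hy hx h hxy]
  · refine hx (mem_iUnion.2 ⟨c x + 1, (hmem _ x).2 ⟨Nat.lt_succ_self _, fun y hy => ?_⟩⟩)
    have hyA : y ∈ ⋃ n, A n := mem_iUnion.2 ⟨_, hy⟩
    exact hins (mem_insert _ _) (mem_insert_of_mem _ hyA) fun h => hx (h ▸ hyA)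

variable [MeasurableSpace X] [StandardBorelSpace X] {S : K → Set X}

lemma exists_measurable_nat_finite_of_mem (hS : MeasurableSet {p : K × X | p.2 ∈ S p.1})
    (hfin : ∀ k, (S k).Finite) (hcount : ∀ x, {k | x ∈ S k}.Countable) :
    ∃ c : K → ℕ, Measurable c ∧ ∀ x n, {k | x ∈ S k ∧ c k = n}.Finite := by
  classical
  obtain ⟨d, hd, hinj⟩ := exists_measurable_nat_injOn_section
    (R := Prod.swap ⁻¹' {p : K × X | p.2 ∈ S p.1}) (measurable_swap hS) hcount
  have hex : ∀ k, ∃ N, ∀ x ∈ S k, d (x, k) ≤ N := fun k =>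
    ((hfin k).image fun x => d (x, k)).bddAbove.imp fun N hN x hx => hN (mem_image_of_mem _ hx)
  have hm : ∀ N, MeasurableSet {k | ∀ x ∈ S k, d (x, k) ≤ N} := by
    intro N
    have hbad : MeasurableSet {k | ∃ x, (k, x) ∈
        {p : K × X | p.2 ∈ S p.1} ∩ {p : K × X | N < d (p.2, p.1)}} :=
      measurableSet_exists_of_countable
        (hS.inter (measurableSet_lt measurable_const (hd.comp measurable_swap)))
        fun k => (hfin k).countable.mono inter_subset_left
    convert hbad.compl using 1
    ext k
    simp
  refine ⟨fun k => Nat.find (hex k), measurable_find hex hm, fun x n => ?_⟩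
  refine Finite.of_finite_image ((finite_Iic n).subset ?_) ((hinj x).mono fun k hk => hk.1)
  rintro _ ⟨k, ⟨hk, rfl⟩, rfl⟩
  exact Nat.find_spec (hex k) x hk

lemma measurableSet_not_disjoint (hS : MeasurableSet {p : K × X | p.2 ∈ S p.1})
    (hcount : ∀ k, (S k).Countable) :
    MeasurableSet {p : K × K | ¬ Disjoint (S p.1) (S p.2)} := by
  have hmeet : MeasurableSet {w : (K × K) × X | w.2 ∈ S w.1.1 ∧ w.2 ∈ S w.1.2} :=
    ((measurable_fst.fst.prodMk measurable_snd) hS).inter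
      ((measurable_fst.snd.prodMk measurable_snd) hS)
  convert measurableSet_exists_of_countable hmeet fun p => (hcount p.1).mono fun x hx => hx.1
  exact not_disjoint_iff

lemma exists_measurable_nat_coloring_not_disjoint
    (hS : MeasurableSet {p : K × X | p.2 ∈ S p.1}) (hfin : ∀ k, (S k).Finite)
    (hcount : ∀ x, {k | x ∈ S k}.Countable) :
    ∃ c : K → ℕ, Measurable c ∧ ∀ ⦃k l⦄, k ≠ l → ¬ Disjoint (S k) (S l) → c k ≠ c l := by
  obtain ⟨c, hc, hcfin⟩ := exists_measurable_nat_finite_of_mem hS hfin hcount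
  obtain ⟨d, hd, hdR⟩ := exists_measurable_nat_coloring
    (R := fun k l => ¬ Disjoint (S k) (S l) ∧ c l = c k)
    ((measurableSet_not_disjoint hS fun k => (hfin k).countable).inter
      (measurableSet_eq_fun (hc.comp measurable_snd) (hc.comp measurable_fst))) fun k => by
        refine ((hfin k).biUnion fun x _ => hcfin x (c k)).subset fun l ⟨hkl, hcl⟩ => ?_
        obtain ⟨x, hxk, hxl⟩ := not_disjoint_iff.1 hkl
        exact mem_biUnion hxk ⟨hxl, hcl⟩
  refine ⟨fun k => Nat.pair (c k) (d k), ?_, fun k l hne hkl hcd => ?_⟩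
  · exact (measurable_of_countable (Function.uncurry Nat.pair)).comp (hc.prodMk hd)
  · obtain ⟨hcc, hdd⟩ := Nat.pair_eq_pair.1 hcd
    exact hdR hne ⟨hkl, hcc.symm⟩ hdd

theorem exists_measurableSet_maximal_pairwiseDisjoint
    (hS : MeasurableSet {p : K × X | p.2 ∈ S p.1}) (hfin : ∀ k, (S k).Finite)
    (hcount : ∀ x, {k | x ∈ S k}.Countable) :
    ∃ A : Set K, MeasurableSet A ∧ Maximal (fun A : Set K => A.PairwiseDisjoint S) A := by
  obtain ⟨c, hc, hcR⟩ := exists_measurable_nat_coloring_not_disjoint hS hfin hcount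
  have hnbr : ∀ k, {l | ¬ Disjoint (S k) (S l)}.Countable := fun k => by
    refine ((hfin k).countable.biUnion fun x _ => hcount x).mono fun l hkl => ?_
    obtain ⟨x, hxk, hxl⟩ := not_disjoint_iff.1 hkl
    exact mem_biUnion hxk hxl
  simpa only [PairwiseDisjoint, Function.onFun, not_not] using
    exists_measurableSet_maximal_independent (fun k l h h' => h h'.symm)
      (measurableSet_not_disjoint hS fun k => (hfin k).countable) hnbr hc hcR

end Combinatorics

section Tiling

variable {K : Type*} {E : X → X → Prop}

/-- The `E`-saturation of `Y`. -/
def saturation (E : X → X → Prop) (Y : Set X) : Set X :=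
  {x | ∃ y, E x y ∧ y ∈ Y}

lemma subset_saturation (hE : Equivalence E) (Y : Set X) : Y ⊆ saturation E Y :=
  fun x hx => ⟨x, hE.refl x, hx⟩

lemma eInvariant_compl_saturation (hE : Equivalence E) (Y : Set X) :
    EInvariant E (saturation E Y)ᶜ :=
  fun _ _ hxy hx ⟨z, hyz, hz⟩ => hx ⟨z, hE.trans hxy hyz, hz⟩

/-- The equivalence relation whose nontrivial classes are the tiles `S k`, `k ∈ A`, restricted to
`B`. -/
def tileRel (S : K → Set X) (A : Set K) (B : Set X) (x y : X) : Prop :=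
  x = y ∨ (x ∈ B ∧ y ∈ B) ∧ ∃ k ∈ A, x ∈ S k ∧ y ∈ S k

/-- A Borel family of pairs of disjoint finite sets, the union `C k ∪ D k` of each pair being
contained in a single `E`-class and each point belonging to only countably many of these unions. -/
structure IsBorelPairFamily [MeasurableSpace X] [MeasurableSpace K] (E : X → X → Prop)
    (C D : K → Finset X) : Prop where
  measurableSet_left : MeasurableSet {p : K × X | p.2 ∈ C p.1}
  measurableSet_right : MeasurableSet {p : K × X | p.2 ∈ D p.1}
  disjoint : ∀ k, Disjoint (C k) (D k)
  rel : ∀ ⦃k x y⦄, x ∈ (C k ∪ D k : Set X) → y ∈ (C k ∪ D k : Set X) → E x y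
  countable : ∀ x, {k | x ∈ (C k ∪ D k : Set X)}.Countable

variable {S : K → Set X} {A : Set K} {B : Set X}

lemma equivalence_tileRel (hA : A.PairwiseDisjoint S) : Equivalence (tileRel S A B) where
  refl _ := Or.inl rfl
  symm := by
    rintro x y (rfl | ⟨⟨hx, hy⟩, k, hk, hxk, hyk⟩)
    exacts [Or.inl rfl, Or.inr ⟨⟨hy, hx⟩, k, hk, hyk, hxk⟩]
  trans := by
    rintro x y z (rfl | ⟨⟨hx, hy⟩, k, hk, hxk, hyk⟩) (rfl | ⟨⟨hy', hz⟩, l, hl, hyl, hzl⟩)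
    · exact Or.inl rfl
    · exact Or.inr ⟨⟨hy', hz⟩, l, hl, hyl, hzl⟩
    · exact Or.inr ⟨⟨hx, hy⟩, k, hk, hxk, hyk⟩
    · obtain rfl := hA.elim_set hk hl y hyk hyl
      exact Or.inr ⟨⟨hx, hz⟩, k, hk, hxk, hzl⟩

lemma tileRel_class_eq (hA : A.PairwiseDisjoint S) {k : K} (hk : k ∈ A) (hkB : S k ⊆ B) {x : X}
    (hx : x ∈ S k) : {z | tileRel S A B z x} = S k := by
  refine Subset.antisymm ?_ fun z hz => Or.inr ⟨⟨hkB hz, hkB hx⟩, k, hk, hz, hx⟩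
  rintro z (rfl | ⟨-, l, hl, hzl, hxl⟩)
  · exact hx
  · rwa [hA.elim_set hk hl x hx hxl]

lemma tileRel_class_finite (hA : A.PairwiseDisjoint S) (hfin : ∀ k, (S k).Finite) (x : X) :
    {y | tileRel S A B x y}.Finite := by
  by_cases hx : ∃ k ∈ A, x ∈ S k
  · obtain ⟨k, hk, hxk⟩ := hx
    refine ((hfin k).insert x).subset ?_
    rintro y (rfl | ⟨-, l, hl, hxl, hyl⟩)
    · exact mem_insert _ _
    · exact mem_insert_of_mem _ (hA.elim_set hk hl x hxk hxl ▸ hyl)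
  · refine (finite_singleton x).subset ?_
    rintro y (rfl | ⟨-, l, hl, hxl, -⟩)
    exacts [rfl, absurd ⟨l, hl, hxl⟩ hx]

lemma inter_iUnion_eq_of_pairwiseDisjoint {T : K → Set X} (hA : A.PairwiseDisjoint S)
    (hTS : ∀ k, T k ⊆ S k) {k : K} (hk : k ∈ A) : S k ∩ ⋃ l ∈ A, T l = T k := by
  refine Subset.antisymm ?_ fun x hx => ⟨hTS k hx, mem_biUnion hk hx⟩
  rintro x ⟨hxk, hx⟩
  obtain ⟨l, hl, hxl⟩ := mem_iUnion₂.1 hx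
  rwa [hA.elim_set hk hl x hxk (hTS l hxl)]

lemma exists_mem_iUnion_of_maximal (hA : Maximal (fun A : Set K => A.PairwiseDisjoint S) A)
    {k : K} (hk : (S k).Nonempty) : ∃ x ∈ S k, x ∈ ⋃ l ∈ A, S l := by
  by_contra! hdisj
  have hins : (insert k A).PairwiseDisjoint S := by
    refine hA.prop.insert fun l hl _ => disjoint_left.2 fun x hxk hxl => ?_
    exact hdisj x hxk (mem_biUnion hl hxl)
  have hkA : k ∈ A := hA.mem_of_prop_insert hins
  obtain ⟨x, hx⟩ := hk
  exact hdisj x hx (mem_biUnion hkA hx)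

variable [MeasurableSpace X]

lemma IsFinSubequivOn.rel {F : X → X → Prop} (hF : IsFinSubequivOn E B F) (hE : Equivalence E)
    {x y : X} (hxy : F x y) : E x y := by
  obtain rfl | ⟨hxy, -⟩ := hF.2.2.1 hxy
  exacts [hE.refl _, hxy]

variable [StandardBorelSpace X]

lemma measurableSet_saturation (hE : IsCBER E) {Y : Set X} (hY : MeasurableSet Y) :
    MeasurableSet (saturation E Y) :=
  measurableSet_exists_of_countable (hE.2.1.inter (measurable_snd hY))
    fun x => (hE.2.2 x).mono fun _ hy => hy.1

variable [MeasurableSpace K] [StandardBorelSpace K]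

lemma measurableSet_biUnion_of_countable (hS : MeasurableSet {p : K × X | p.2 ∈ S p.1})
    (hcount : ∀ x, {k | x ∈ S k}.Countable) (hA : MeasurableSet A) :
    MeasurableSet (⋃ k ∈ A, S k) := by
  have hR : MeasurableSet {p : X × K | p.2 ∈ A ∧ p.1 ∈ S p.2} :=
    (measurable_snd hA).inter (measurable_swap hS)
  convert measurableSet_exists_of_countable hR fun x => (hcount x).mono fun k hk => hk.2
  ext x
  simp

lemma isFinSubequivOn_tileRel (hS : MeasurableSet {p : K × X | p.2 ∈ S p.1})
    (hfin : ∀ k, (S k).Finite) (hcount : ∀ x, {k | x ∈ S k}.Countable)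
    (hSE : ∀ ⦃k x y⦄, x ∈ S k → y ∈ S k → E x y) (hAm : MeasurableSet A)
    (hA : A.PairwiseDisjoint S) (hB : MeasurableSet B) :
    IsFinSubequivOn E B (tileRel S A B) := by
  refine ⟨equivalence_tileRel hA, ?_, ?_, tileRel_class_finite hA hfin⟩
  · have hsame : MeasurableSet {w : (X × X) × K | w.2 ∈ A ∧ w.1.1 ∈ S w.2 ∧ w.1.2 ∈ S w.2} :=
      (measurable_snd hAm).inter (((measurable_snd.prodMk measurable_fst.fst) hS).inter
        ((measurable_snd.prodMk measurable_fst.snd) hS))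
    exact measurableSet_diagonal.union ((hB.prod hB).inter (measurableSet_exists_of_countable hsame
      fun p => (hcount p.1).mono fun k hk => hk.2.1))
  · rintro x y (rfl | ⟨⟨hx, hy⟩, k, -, hxk, hyk⟩)
    exacts [Or.inl rfl, Or.inr ⟨hSE hxk hyk, hx, hy⟩]

theorem IsBorelPairFamily.exists_isFinSubequivOn (hE : IsCBER E) {C D : K → Finset X}
    (h : IsBorelPairFamily E C D) :
    ∃ (Y M : Set X) (F : X → X → Prop), MeasurableSet Y ∧ MeasurableSet M ∧
      M ⊆ (saturation E Y)ᶜ ∧ IsFinSubequivOn E (saturation E Y)ᶜ F ∧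
      (∀ k, (C k ∪ D k : Set X).Nonempty → ∃ x ∈ (C k ∪ D k : Set X), x ∉ Y) ∧
      ∀ x ∈ (saturation E Y)ᶜ, ∃ k, x ∈ (C k ∪ D k : Set X) ∧
        {z | F z x} ∩ M = C k ∧ {z | F z x} ∩ ((saturation E Y)ᶜ \ M) = D k := by
  let S : K → Set X := fun k => C k ∪ D k
  have hS : MeasurableSet {p : K × X | p.2 ∈ S p.1} :=
    h.measurableSet_left.union h.measurableSet_right
  have hfin : ∀ k, (S k).Finite := fun k => (C k).finite_toSet.union (D k).finite_toSet
  obtain ⟨A, hAm, hA⟩ := exists_measurableSet_maximal_pairwiseDisjoint hS hfin h.countable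
  let Y : Set X := (⋃ k ∈ A, S k)ᶜ
  let B : Set X := (saturation E Y)ᶜ
  have hY : MeasurableSet Y := (measurableSet_biUnion_of_countable hS h.countable hAm).compl
  have hB : MeasurableSet B := (measurableSet_saturation hE hY).compl
  let M : Set X := B ∩ ⋃ k ∈ A, (C k : Set X)
  have hM : MeasurableSet M := hB.inter (measurableSet_biUnion_of_countable h.measurableSet_left
    (fun x => (h.countable x).mono fun k hk => Or.inl hk) hAm)
  refine ⟨Y, M, tileRel S A B, hY, hM, inter_subset_left,
    isFinSubequivOn_tileRel hS hfin h.countable h.rel hAm hA.prop hB, fun k hk => ?_,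
    fun x hx => ?_⟩
  · obtain ⟨x, hxk, hxA⟩ := exists_mem_iUnion_of_maximal hA hk
    exact ⟨x, hxk, fun hxY => hxY hxA⟩
  · have hxY : x ∈ ⋃ k ∈ A, S k := not_notMem.1 fun hxY => hx (subset_saturation hE.1 Y hxY)
    obtain ⟨k, hk, hxk⟩ := mem_iUnion₂.1 hxY
    have hkB : S k ⊆ B := fun y hy => eInvariant_compl_saturation hE.1 Y (h.rel hxk hy) hx
    have hCM : S k ∩ M = C k := by
      rw [← inter_assoc, inter_eq_left.2 hkB]
      exact inter_iUnion_eq_of_pairwiseDisjoint hA.prop (fun _ => subset_union_left) hk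
    refine ⟨k, hxk, ?_⟩
    rw [tileRel_class_eq hA.prop hk hkB hxk]
    refine ⟨hCM, ?_⟩
    rw [← inter_sdiff_assoc, inter_eq_left.2 hkB, ← sdiff_inter_self_eq_sdiff, inter_comm M, hCM]
    exact union_sdiff_cancel_left (Finset.disjoint_coe.2 (h.disjoint k)).le_bot

end Tiling
section Balanced

variable {ι κ : Type*} {r : ℝ} {α β : ι → ℝ} {C D : Finset ι}

/-- `C` and `D` are disjoint, not both empty, and the `β`-weight of `D` lies between the
`α`-weight of `C` and `r` times that weight. -/
structure IsBalanced (r : ℝ) (α β : ι → ℝ) (C D : Finset ι) : Prop where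
  disjoint : Disjoint C D
  nonempty : (C ∪ D : Set ι).Nonempty
  sum_le_sum : ∑ i ∈ C, α i ≤ ∑ i ∈ D, β i
  sum_le_mul_sum : ∑ i ∈ D, β i ≤ r * ∑ i ∈ C, α i

lemma isBalanced_image_iff [DecidableEq κ] {u : ι → κ} {α β : κ → ℝ}
    (hu : InjOn u (C ∪ D)) :
    IsBalanced r α β (C.image u) (D.image u) ↔ IsBalanced r (α ∘ u) (β ∘ u) C D := by
  have hsumC : ∑ z ∈ C.image u, α z = ∑ i ∈ C, (α ∘ u) i :=
    Finset.sum_image (hu.mono subset_union_left)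
  have hsumD : ∑ z ∈ D.image u, β z = ∑ i ∈ D, (β ∘ u) i :=
    Finset.sum_image (hu.mono subset_union_right)
  have hdisj : Disjoint (C.image u) (D.image u) ↔ Disjoint C D := by
    rw [← Finset.disjoint_coe, ← Finset.disjoint_coe, Finset.coe_image, Finset.coe_image]
    refine ⟨.of_image, fun h => disjoint_image_image fun i hi j hj hij => ?_⟩
    exact disjoint_left.1 h hi (hu (Or.inl hi) (Or.inr hj) hij ▸ hj)
  have hne : (C.image u ∪ D.image u : Set κ).Nonempty ↔ (C ∪ D : Set ι).Nonempty := by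
    rw [Finset.coe_image, Finset.coe_image, ← image_union, image_nonempty]
  constructor
  · rintro ⟨h₁, h₂, h₃, h₄⟩
    exact ⟨hdisj.1 h₁, hne.1 h₂, hsumC ▸ hsumD ▸ h₃, hsumC ▸ hsumD ▸ h₄⟩
  · rintro ⟨h₁, h₂, h₃, h₄⟩
    exact ⟨hdisj.2 h₁, hne.2 h₂, hsumC ▸ hsumD ▸ h₃, hsumC ▸ hsumD ▸ h₄⟩

lemma IsBalanced.of_eq_mul {α' β' : ι → ℝ} {c : ℝ} (h : IsBalanced r α β C D) (hc : 0 ≤ c)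
    (hα : ∀ i ∈ C, α' i = α i * c) (hβ : ∀ i ∈ D, β' i = β i * c) : IsBalanced r α' β' C D where
  disjoint := h.disjoint
  nonempty := h.nonempty
  sum_le_sum := by
    rw [Finset.sum_congr rfl hα, Finset.sum_congr rfl hβ, ← Finset.sum_mul, ← Finset.sum_mul]
    exact mul_le_mul_of_nonneg_right h.sum_le_sum hc
  sum_le_mul_sum := by
    rw [Finset.sum_congr rfl hα, Finset.sum_congr rfl hβ, ← Finset.sum_mul, ← Finset.sum_mul,
      ← mul_assoc]
    exact mul_le_mul_of_nonneg_right h.sum_le_mul_sum hc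

lemma exists_nat_mul_lt_lt_mul {u v : ℝ} (hu : 0 ≤ u) (huv : u < v) :
    ∃ k l : ℕ, 0 < k ∧ k * u < l ∧ l < k * v := by
  obtain ⟨k, hk⟩ := exists_nat_gt (1 / (v - u))
  have hvu : 0 < v - u := sub_pos.2 huv
  have hk0 : (0 : ℝ) < k := (by positivity : 0 < 1 / (v - u)).trans hk
  have hgap : 1 < k * (v - u) := (div_lt_iff₀ hvu).1 hk
  refine ⟨k, ⌊k * u⌋₊ + 1, Nat.cast_pos.1 hk0, ?_, ?_⟩
  · exact_mod_cast Nat.lt_floor_add_one (k * u)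
  · have hfloor : (⌊k * u⌋₊ : ℝ) ≤ k * u := Nat.floor_le (by positivity)
    push_cast
    linarith

/-- If `l / k` lies between `t * a / b` and `(r / t) * a / b`, then any disjoint sets of
cardinalities `k` and `l` are balanced. -/
lemma exists_isBalanced_of_infinite {W : Set ι} (hW : W.Infinite) {a b t : ℝ}
    (ha : 0 < a) (hb : 0 < b) (ht : 0 < t) (htr : t ^ 2 < r)
    (hα : ∀ i ∈ W, α i ∈ Icc a (a * t)) (hβ : ∀ i ∈ W, β i ∈ Icc b (b * t)) :
    ∃ C D : Finset ι, ↑C ⊆ W ∧ ↑D ⊆ W ∧ IsBalanced r α β C D := by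
  have hr : 0 < r := (by positivity : 0 < t ^ 2).trans htr
  have hbounds : t * a / b < r / t * a / b := by
    have : t < r / t := by rwa [lt_div_iff₀ ht, ← sq]
    gcongr
  obtain ⟨k, l, hk, hkl, hlk⟩ := exists_nat_mul_lt_lt_mul (by positivity) hbounds
  obtain ⟨C, hCW, hCk⟩ := hW.exists_subset_card_eq k
  obtain ⟨D, hDW, hDl⟩ := (hW.sdiff C.finite_toSet).exists_subset_card_eq l
  have hDW' : (D : Set ι) ⊆ W := hDW.trans sdiff_subset
  refine ⟨C, D, hCW, hDW', ?_, ?_, ?_, ?_⟩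
  · exact Finset.disjoint_right.2 fun i hi => (hDW hi).2
  · exact (Finset.card_pos.1 (hCk ▸ hk)).to_set.mono subset_union_left
  · calc ∑ i ∈ C, α i
        ≤ k * (a * t) := by
          rw [← hCk, ← nsmul_eq_mul]
          exact Finset.sum_le_card_nsmul _ _ _ fun i hi => (hα i (hCW hi)).2
      _ = k * (t * a / b) * b := by field_simp
      _ ≤ l * b := by gcongr
      _ ≤ ∑ i ∈ D, β i := by
          rw [← hDl, ← nsmul_eq_mul]
          exact Finset.card_nsmul_le_sum _ _ _ fun i hi => (hβ i (hDW' hi)).1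
  · calc ∑ i ∈ D, β i
        ≤ l * (b * t) := by
          rw [← hDl, ← nsmul_eq_mul]
          exact Finset.sum_le_card_nsmul _ _ _ fun i hi => (hβ i (hDW' hi)).2
      _ ≤ k * (r / t * a / b) * (b * t) := by gcongr
      _ = r * (k * a) := by field_simp
      _ ≤ r * ∑ i ∈ C, α i := by
          gcongr
          rw [← hCk, ← nsmul_eq_mul]
          exact Finset.card_nsmul_le_sum _ _ _ fun i hi => (hα i (hCW hi)).1

lemma exists_injOn_image_eq [Nonempty ι] [DecidableEq κ]
    {u : ι → κ} {C D : Finset κ} (h : (C ∪ D : Set κ) ⊆ range u) :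
    ∃ s t : Finset ι, InjOn u (s ∪ t) ∧ s.image u = C ∧ t.image u = D := by
  classical
  have hex : ∀ y ∈ (C ∪ D : Set κ), ∃ i, u i = y := h
  choose! v hv using hex
  have himage : ∀ S : Finset κ, (S : Set κ) ⊆ C ∪ D → (S.image v).image u = S := fun S hS => by
    have huv : EqOn (u ∘ v) id S := fun y hy => hv y (hS hy)
    rw [Finset.image_image, Finset.image_congr huv, Finset.image_id]
  refine ⟨C.image v, D.image v, ?_, himage C subset_union_left, himage D subset_union_right⟩
  rw [Finset.coe_image, Finset.coe_image, ← image_union]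
  rintro _ ⟨y, hy, rfl⟩ _ ⟨z, hz, rfl⟩ hyz
  rw [hv y hy, hv z hz] at hyz
  rw [hyz]

lemma measurableSet_isBalanced [MeasurableSpace X] {a b : ι → X → ℝ} (ha : ∀ i, Measurable (a i))
    (hb : ∀ i, Measurable (b i)) (r : ℝ) (s t : Finset ι) :
    MeasurableSet {x | IsBalanced r (a · x) (b · x) s t} := by
  have hs : Measurable fun x => ∑ i ∈ s, a i x := Finset.measurable_fun_sum s fun i _ => ha i
  have ht : Measurable fun x => ∑ i ∈ t, b i x := Finset.measurable_fun_sum t fun i _ => hb i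
  convert ((MeasurableSet.const (Disjoint s t)).inter (.const (s ∪ t : Set ι).Nonempty)).inter
    ((measurableSet_le hs ht).inter (measurableSet_le ht (hs.const_mul r))) using 1
  ext x
  exact ⟨fun h => ⟨⟨h.1, h.2⟩, h.3, h.4⟩, fun h => ⟨h.1.1, h.1.2, h.2.1, h.2.2⟩⟩

lemma measurableSet_injOn [MeasurableSpace X] [MeasurableSpace κ] [MeasurableEq κ]
    {e : ι → X → κ} (he : ∀ i, Measurable (e i)) {s : Set ι} (hs : s.Countable) :
    MeasurableSet {x | InjOn (e · x) s} := by
  have : {x | InjOn (e · x) s} = ⋂ i ∈ s, ⋂ j ∈ s, {x | e i x = e j x → i = j} := by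
    ext x
    simp only [InjOn, mem_ofPred_eq, mem_iInter]
  rw [this]
  exact .biInter hs fun i _ => .biInter hs fun j _ =>
    (measurableSet_eq_fun (he i) (he j)).imp (.const _)

lemma measurableSet_of_measurableSet_section [MeasurableSpace X] [MeasurableSpace ι] [Countable ι]
    [MeasurableSingletonClass ι] {T : Set (ι × X)} (hT : ∀ i, MeasurableSet {x | (i, x) ∈ T}) :
    MeasurableSet T :=
  measurableSet_setOfPred.2 <|
    measurable_from_prod_countable_right fun i => measurableSet_setOfPred.1 (hT i)

end Balanced

section BalancedPair

variable {E : X → X → Prop} {ρ : X → X → ℝ} {f g : X → ℝ} {r : ℝ} {C D : Finset X}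

/-- `C` and `D` are contained in a single `E`-class and are balanced for the weights `f` and `g`,
scaled by the cocycle `ρ`. By the cocycle identity, this does not depend on the choice of the
point of that class relative to which `ρ` is computed. -/
def IsBalancedPair (E : X → X → Prop) (ρ : X → X → ℝ) (f g : X → ℝ) (r : ℝ)
    (C D : Finset X) : Prop :=
  ∃ x, (∀ y ∈ (C ∪ D : Set X), E x y) ∧
    IsBalanced r (fun z => f z * ρ z x) (fun z => g z * ρ z x) C D

lemma isBalancedPair_singleton_empty (hE : Equivalence E) {x : X} (hx : f x = 0) :
    IsBalancedPair E ρ f g r {x} ∅ := by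
  refine ⟨x, by simp [hE.refl x], ?_, ?_, ?_, ?_⟩ <;> simp [hx]

lemma isBalancedPair_empty_singleton (hE : Equivalence E) {x : X} (hx : g x = 0) :
    IsBalancedPair E ρ f g r ∅ {x} := by
  refine ⟨x, by simp [hE.refl x], ?_, ?_, ?_, ?_⟩ <;> simp [hx]

variable [MeasurableSpace X]

lemma IsBalancedPair.isBalanced (hE : Equivalence E) (hρ : IsCocycle E ρ)
    (h : IsBalancedPair E ρ f g r C D) {x : X} (hx : x ∈ (C ∪ D : Set X)) :
    IsBalanced r (fun z => f z * ρ z x) (fun z => g z * ρ z x) C D := by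
  obtain ⟨y, hy, hbal⟩ := h
  have hcoc : ∀ z ∈ (C ∪ D : Set X), ρ z x = ρ z y * ρ y x := fun z hz =>
    hρ.2.2 (hE.symm (hy z hz)) (hy x hx)
  refine hbal.of_eq_mul (hρ.2.1 (hy x hx)).le (fun z hz => ?_) fun z hz => ?_
  · rw [hcoc z (Or.inl hz), mul_assoc]
  · rw [hcoc z (Or.inr hz), mul_assoc]

lemma isBorelPairFamily_image [StandardBorelSpace X] [DecidableEq X] (hE : IsCBER E)
    {e : ℕ → X → X} (he : ∀ n, Measurable (e n)) (heE : ∀ n x, E x (e n x)) (s t : ℕ → Finset ℕ)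
    {T : Set (ℕ × X)}
    (hT : ∀ k ∈ T, Disjoint ((s k.1).image (e · k.2)) ((t k.1).image (e · k.2))) :
    IsBorelPairFamily E (fun k : T => (s k.1.1).image (e · k.1.2))
      fun k : T => (t k.1.1).image (e · k.1.2) := by
  have hmem : ∀ s : ℕ → Finset ℕ,
      MeasurableSet {p : T × X | p.2 ∈ (s p.1.1.1).image (e · p.1.1.2)} := fun s => by
    simp only [Finset.mem_image, ofPred_exists, ofPred_and]
    refine .iUnion fun n => .inter ?_ ?_
    · exact (measurable_subtype_coe.comp measurable_fst).fst (.of_discrete (s := {i | n ∈ s i}))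
    · exact measurableSet_eq_fun ((he n).comp (measurable_subtype_coe.comp measurable_fst).snd)
        measurable_snd
  have hrel : ∀ k : T, ∀ x ∈ ((s k.1.1).image (e · k.1.2) ∪ (t k.1.1).image (e · k.1.2) : Set X),
      E k.1.2 x := fun k x hx => by
    simp only [Finset.coe_image, ← image_union] at hx
    obtain ⟨n, -, rfl⟩ := hx
    exact heE n _
  refine ⟨hmem s, hmem t, fun k => hT k k.2, fun k x y hx hy => ?_, fun x => ?_⟩
  · exact hE.1.trans (hE.1.symm (hrel k x hx)) (hrel k y hy)
  · have hcount : (univ ×ˢ {y | E x y} : Set (ℕ × X)).Countable :=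
      countable_univ.prod (hE.2.2 x)
    refine (hcount.preimage_of_injOn Subtype.val_injective.injOn).mono fun k hk => ?_
    exact ⟨mem_univ _, hE.1.symm (hrel k x hk)⟩

/-- A pair of finite subsets of the class of `x` is coded by `x` and a pair of finite sets of
indices in an enumeration of that class. -/
theorem exists_isBorelPairFamily_isBalancedPair [StandardBorelSpace X] (hE : IsCBER E)
    (hρ : IsCocycle E ρ) (hf : Measurable f) (hg : Measurable g) (r : ℝ) :
    ∃ (T : Set (ℕ × X)) (C D : T → Finset X), MeasurableSet T ∧ IsBorelPairFamily E C D ∧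
      ∀ C' D', IsBalancedPair E ρ f g r C' D' ↔ ∃ k, C k = C' ∧ D k = D' := by
  classical
  obtain ⟨e, he, heE, hsurj⟩ := exists_measurable_enumeration hE
  obtain ⟨u, hu⟩ := exists_surjective_nat (Finset ℕ × Finset ℕ)
  let s : ℕ → Finset ℕ := fun i => (u i).1
  let t : ℕ → Finset ℕ := fun i => (u i).2
  let α : X → X → ℝ := fun x z => f z * ρ z x
  let β : X → X → ℝ := fun x z => g z * ρ z x
  have hα : ∀ n, Measurable fun x => α x (e n x) := fun n =>
    (hf.comp (he n)).mul (hρ.1.comp ((he n).prodMk measurable_id))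
  have hβ : ∀ n, Measurable fun x => β x (e n x) := fun n =>
    (hg.comp (he n)).mul (hρ.1.comp ((he n).prodMk measurable_id))
  let T : Set (ℕ × X) := {k | InjOn (e · k.2) (s k.1 ∪ t k.1) ∧
    IsBalanced r (α k.2 <| e · k.2) (β k.2 <| e · k.2) (s k.1) (t k.1)}
  have hT : MeasurableSet T := measurableSet_of_measurableSet_section fun i =>
    (measurableSet_injOn he (to_countable (s i ∪ t i : Set ℕ))).inter
      (measurableSet_isBalanced hα hβ r (s i) (t i))
  have hbal : ∀ k ∈ T, IsBalanced r (α k.2) (β k.2) ((s k.1).image (e · k.2))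
      ((t k.1).image (e · k.2)) := fun k hk => (isBalanced_image_iff hk.1).2 hk.2
  have hfamily := isBorelPairFamily_image hE he heE s t fun k hk => (hbal k hk).disjoint
  refine ⟨T, _, _, hT, hfamily, fun C' D' => ⟨?_, ?_⟩⟩
  · rintro ⟨x, hx, hC'D'⟩
    obtain ⟨s', t', hinj, rfl, rfl⟩ := exists_injOn_image_eq fun y hy => hsurj x y (hx y hy)
    obtain ⟨i, hi⟩ := hu (s', t')
    obtain ⟨rfl, rfl⟩ : s i = s' ∧ t i = t' := ⟨congrArg Prod.fst hi, congrArg Prod.snd hi⟩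
    exact ⟨⟨(i, x), hinj, (isBalanced_image_iff hinj).1 hC'D'⟩, rfl, rfl⟩
  · rintro ⟨k, rfl, rfl⟩
    refine ⟨k.1.2, fun y hy => ?_, hbal k k.2⟩
    simp only [Finset.coe_image, ← image_union] at hy
    obtain ⟨n, -, rfl⟩ := hy
    exact heE n _

end BalancedPair
section Smoothness

variable [MeasurableSpace X] {E : X → X → Prop} {ρ : X → X → ℝ} {W Y : Set X}

lemma IsCocycle.log_eq_add (hρ : IsCocycle E ρ) {x y z : X} (hxy : E x y) (hyz : E y z) :
    Real.log (ρ x z) = Real.log (ρ x y) + Real.log (ρ y z) := by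
  rw [hρ.2.2 hxy hyz, Real.log_mul (hρ.2.1 hxy).ne' (hρ.2.1 hyz).ne']

lemma IsCocycle.log_symm (hρ : IsCocycle E ρ) (hE : Equivalence E) {x y : X} (hxy : E x y) :
    Real.log (ρ y x) = -Real.log (ρ x y) := by
  have hxyx := hρ.log_eq_add hxy (hE.symm hxy)
  have hxx := hρ.log_eq_add (hE.refl x) (hE.refl x)
  linarith

lemma IsCocycle.measurable_log (hρ : IsCocycle E ρ) :
    Measurable fun p : X × X => Real.log (ρ p.1 p.2) :=
  Real.measurable_log.comp hρ.1

lemma smoothOn_iff (hρ : IsCocycle E ρ) :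
    SmoothOn E ρ W ↔ ∃ δ > 0, ∃ c : X → ℕ, Measurable c ∧ ∀ ⦃x y⦄, x ∈ W → y ∈ W → x ≠ y →
      E x y → |Real.log (ρ x y)| < δ → c x ≠ c y := by
  constructor
  · rintro ⟨U, hU, h1, -, c, hc, hcol⟩
    obtain ⟨δ, hδ, hball⟩ : ∃ δ > 0, Metric.ball 0 δ ⊆ Real.exp ⁻¹' U :=
      Metric.isOpen_iff.1 (hU.preimage Real.continuous_exp) 0 (by simpa using h1)
    refine ⟨δ, hδ, c, hc, fun x y hx hy hxy hE hlog => hcol hx hy hxy hE ?_⟩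
    rw [← Real.exp_log (hρ.2.1 hE)]
    exact hball (by simpa using hlog)
  · rintro ⟨δ, hδ, c, hc, hcol⟩
    refine ⟨Ioo (Real.exp (-δ)) (Real.exp δ), isOpen_Ioo, ⟨by simpa using hδ, by simpa using hδ⟩,
      fun u hu => (Real.exp_pos _).trans hu.1, c, hc, fun x y hx hy hxy hE hU => ?_⟩
    have hpos := hρ.2.1 hE
    exact hcol hx hy hxy hE <| abs_lt.2
      ⟨(Real.lt_log_iff_exp_lt hpos).2 hU.1, (Real.log_lt_iff_lt_exp hpos).2 hU.2⟩

section Coloring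

variable {ι : Type*} [Countable ι] [MeasurableSpace ι] [MeasurableSingletonClass ι] {κ : X → ι}
  {δ : ℝ}

lemma smoothOn_of_countable_coloring (hρ : IsCocycle E ρ) (hδ : 0 < δ) (hκ : Measurable κ)
    (h : ∀ ⦃x y⦄, x ∈ W → y ∈ W → x ≠ y → E x y → |Real.log (ρ x y)| < δ → κ x ≠ κ y) :
    SmoothOn E ρ W := by
  obtain ⟨u, hu⟩ := exists_injective_nat ι
  exact (smoothOn_iff hρ).2 ⟨δ, hδ, u ∘ κ, (measurable_of_countable u).comp hκ,
    fun x y hx hy hxy hE hlog => hu.ne (h hx hy hxy hE hlog)⟩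

lemma smoothOn_of_finite [StandardBorelSpace X] (hE : IsCBER E) (hρ : IsCocycle E ρ)
    (hW : MeasurableSet W) (hδ : 0 < δ) (hκ : Measurable κ)
    (hfin : ∀ x ∈ W, {y ∈ W | E x y ∧ |Real.log (ρ x y)| < δ ∧ κ x = κ y}.Finite) :
    SmoothOn E ρ W := by
  let R : X → X → Prop := fun x y => x ∈ W ∧ y ∈ W ∧ E x y ∧ |Real.log (ρ x y)| < δ ∧ κ x = κ y
  have hR : MeasurableSet {p : X × X | R p.1 p.2} :=
    (measurable_fst hW).inter <| (measurable_snd hW).inter <| hE.2.1.inter <|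
      (measurableSet_lt hρ.measurable_log.abs measurable_const).inter <|
        measurableSet_eq_fun (hκ.comp measurable_fst) (hκ.comp measurable_snd)
  have hRfin : ∀ x, {y | R x y}.Finite := fun x => by
    by_cases hx : x ∈ W
    · exact (hfin x hx).subset fun y hy => hy.2
    · exact finite_empty.subset fun y hy => hx hy.1
  obtain ⟨c, hc, hcol⟩ := exists_measurable_nat_coloring hR hRfin
  refine smoothOn_of_countable_coloring hρ hδ (hκ.prodMk hc) fun x y hx hy hxy hE hlog h => ?_
  obtain ⟨hκxy, hcxy⟩ := Prod.mk.inj h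
  exact hcol hxy ⟨hx, hy, hE, hlog, hκxy⟩ hcxy

end Coloring

lemma abs_sub_lt_of_floor_div_eq {a b δ : ℝ} (hδ : 0 < δ) (h : ⌊a / δ⌋ = ⌊b / δ⌋) :
    |a - b| < δ := by
  have hlt : |a / δ - b / δ| < 1 := Int.abs_sub_lt_one_of_floor_eq_floor h
  rwa [← sub_div, abs_div, abs_of_pos hδ, div_lt_one hδ] at hlt

lemma mul_mem_Icc_exp {a b c δ : ℝ} (ha : 0 < a) (hb : 0 < b) (hc : 0 < c)
    (hab : |Real.log a - Real.log b| < δ) (hc' : |Real.log c| < δ) :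
    b * c ∈ Icc (a * Real.exp (-(2 * δ))) (a * Real.exp (-(2 * δ)) * Real.exp (4 * δ)) := by
  rw [abs_lt] at hab hc'
  rw [← Real.exp_log ha, ← Real.exp_log (mul_pos hb hc), Real.log_mul hb.ne' hc.ne',
    ← Real.exp_add, ← Real.exp_add]
  constructor <;> rw [Real.exp_le_exp] <;> linarith

/-- On `W` the weights `f * ρ` and `g * ρ` vary by a factor of at most `e ^ (4 * δ)`, whose square
is less than `r`. -/
lemma exists_isBalancedPair_of_infinite (hE : Equivalence E) (hρ : IsCocycle E ρ) {f g : X → ℝ}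
    {r δ : ℝ} (hr : 0 < r) (hδ : 8 * δ < Real.log r) {x : X} (hfx : 0 < f x) (hgx : 0 < g x)
    (hW : W.Infinite) (hWE : ∀ y ∈ W, E x y ∧ |Real.log (ρ x y)| < δ)
    (hWf : ∀ y ∈ W, 0 < f y ∧ |Real.log (f x) - Real.log (f y)| < δ)
    (hWg : ∀ y ∈ W, 0 < g y ∧ |Real.log (g x) - Real.log (g y)| < δ) :
    ∃ C D : Finset X, ↑C ⊆ W ∧ ↑D ⊆ W ∧ IsBalancedPair E ρ f g r C D := by
  have hexp : Real.exp (4 * δ) ^ 2 < r := by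
    rw [← Real.exp_nat_mul, ← Real.lt_log_iff_exp_lt hr]
    push_cast
    linarith
  have hρx : ∀ y ∈ W, 0 < ρ y x ∧ |Real.log (ρ y x)| < δ := fun y hy => by
    obtain ⟨hxy, hlog⟩ := hWE y hy
    rw [hρ.log_symm hE hxy, abs_neg]
    exact ⟨hρ.2.1 (hE.symm hxy), hlog⟩
  obtain ⟨C, D, hC, hD, hbal⟩ := exists_isBalanced_of_infinite hW
    (α := fun y => f y * ρ y x) (β := fun y => g y * ρ y x)
    (by positivity) (by positivity) (Real.exp_pos _) hexp
    (fun y hy => mul_mem_Icc_exp hfx (hWf y hy).1 (hρx y hy).1 (hWf y hy).2 (hρx y hy).2)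
    (fun y hy => mul_mem_Icc_exp hgx (hWg y hy).1 (hρx y hy).1 (hWg y hy).2 (hρx y hy).2)
  exact ⟨C, D, hC, hD, x, fun y hy => (hWE y (union_subset hC hD hy)).1, hbal⟩

theorem smoothOn_of_forall_isBalancedPair [StandardBorelSpace X] (hE : IsCBER E)
    (hρ : IsCocycle E ρ) {f g : X → ℝ} (hf : Measurable f) (hf0 : ∀ x, 0 ≤ f x)
    (hg : Measurable g) (hg0 : ∀ x, 0 ≤ g x) {r : ℝ} (hr : 1 < r) (hY : MeasurableSet Y)
    (h : ∀ C D, IsBalancedPair E ρ f g r C D → ∃ x ∈ (C ∪ D : Set X), x ∉ Y) :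
    SmoothOn E ρ Y := by
  have hfY : ∀ x ∈ Y, 0 < f x := fun x hx => (hf0 x).lt_of_ne' fun hfx => by
    simpa [hx] using h _ _ (isBalancedPair_singleton_empty hE.1 hfx)
  have hgY : ∀ x ∈ Y, 0 < g x := fun x hx => (hg0 x).lt_of_ne' fun hgx => by
    simpa [hx] using h _ _ (isBalancedPair_empty_singleton hE.1 hgx)
  have hlog : 0 < Real.log r := Real.log_pos hr
  obtain ⟨δ, hδ, hδr⟩ : ∃ δ > 0, 8 * δ < Real.log r :=
    ⟨Real.log r / 9, by positivity, by linarith⟩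
  let κ : X → ℤ × ℤ := fun x => (⌊Real.log (f x) / δ⌋, ⌊Real.log (g x) / δ⌋)
  have hκ : Measurable κ := (hf.log.div_const δ).floor.prodMk (hg.log.div_const δ).floor
  refine smoothOn_of_finite hE hρ hY hδ hκ fun x hx => not_infinite.1 fun hinf => ?_
  obtain ⟨C, D, hC, hD, hbal⟩ := exists_isBalancedPair_of_infinite hE.1 hρ (by linarith) hδr
    (hfY x hx) (hgY x hx) hinf (fun y hy => ⟨hy.2.1, hy.2.2.1⟩)
    (fun y hy => ⟨hfY y hy.1, abs_sub_lt_of_floor_div_eq hδ (congrArg Prod.fst hy.2.2.2)⟩)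
    (fun y hy => ⟨hgY y hy.1, abs_sub_lt_of_floor_div_eq hδ (congrArg Prod.snd hy.2.2.2)⟩)
  obtain ⟨y, hy, hyY⟩ := h C D hbal
  exact hyY (union_subset hC hD hy).1

lemma exists_measurable_retraction_saturation [StandardBorelSpace X] (hE : IsCBER E)
    (hY : MeasurableSet Y) :
    ∃ φ : X → X, Measurable φ ∧ (∀ x, E x (φ x)) ∧ ∀ x ∈ saturation E Y, φ x ∈ Y := by
  obtain ⟨e, he, heE, hsurj⟩ := exists_measurable_enumeration hE
  have hex : ∀ x, ∃ n, e n x ∈ Y ∨ x ∉ saturation E Y := fun x => by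
    by_cases hx : x ∈ saturation E Y
    · obtain ⟨y, hxy, hy⟩ := hx
      obtain ⟨n, rfl⟩ := hsurj x y hxy
      exact ⟨n, Or.inl hy⟩
    · exact ⟨0, Or.inr hx⟩
  classical
  have hfind : Measurable fun x => Nat.find (hex x) := measurable_find hex fun n =>
    (he n hY).union (measurableSet_saturation hE hY).compl
  refine ⟨fun x => e (Nat.find (hex x)) x, ?_, fun x => heE _ x, fun x hx =>
    (Nat.find_spec (hex x)).resolve_right (not_not.2 hx)⟩
  exact (measurable_from_prod_countable_right he : Measurable fun p : ℕ × X => e p.1 p.2).comp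
    (hfind.prodMk measurable_id)

/-- A coloring of `Y` is pulled back along a map `φ` into `Y`, after splitting the saturation into
countably many pieces on which `φ` is injective and distorts `log ρ` by at most `δ / 2`. -/
theorem SmoothOn.saturation [StandardBorelSpace X] (hE : IsCBER E) (hρ : IsCocycle E ρ)
    (hY : MeasurableSet Y) (h : SmoothOn E ρ Y) : SmoothOn E ρ (saturation E Y) := by
  obtain ⟨δ, hδ, c, hc, hcol⟩ := (smoothOn_iff hρ).1 h
  obtain ⟨φ, hφ, hφE, hφY⟩ := exists_measurable_retraction_saturation hE hY
  have hfiber : ∀ y, {x | φ x = y}.Countable := fun y =>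
    (hE.2.2 y).mono fun x hx => hE.1.symm (hx ▸ hφE x)
  obtain ⟨m, hm, hinj⟩ := exists_measurable_nat_injOn_section
    (R := {p : X × X | φ p.2 = p.1})
    (measurableSet_eq_fun (hφ.comp measurable_snd) measurable_fst) hfiber
  let κ : X → ℕ × ℤ × ℕ := fun x => (m (φ x, x), ⌊Real.log (ρ x (φ x)) / (δ / 2)⌋, c (φ x))
  have hκ : Measurable κ := (hm.comp (hφ.prodMk measurable_id)).prodMk <|
    ((hρ.measurable_log.comp (measurable_id.prodMk hφ)).div_const _).floor.prodMk (hc.comp hφ)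
  refine smoothOn_of_countable_coloring hρ (half_pos hδ) hκ fun x y hx hy hne hxy hlog heq => ?_
  obtain ⟨hmxy, hfloor, hcxy⟩ : m (φ x, x) = m (φ y, y) ∧
      ⌊Real.log (ρ x (φ x)) / (δ / 2)⌋ = ⌊Real.log (ρ y (φ y)) / (δ / 2)⌋ ∧ c (φ x) = c (φ y) := by
    simpa only [κ, Prod.mk.injEq] using heq
  have hφne : φ x ≠ φ y := fun hφxy =>
    hne (hinj (φ x) rfl hφxy.symm (hmxy.trans (by rw [hφxy])))
  have hxφy : E x (φ y) := hE.1.trans hxy (hφE y)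
  have hφxy : E (φ x) (φ y) := hE.1.trans (hE.1.symm (hφE x)) hxφy
  refine hcol (hφY x hx) (hφY y hy) hφne hφxy ?_ hcxy
  have hdist : Real.log (ρ (φ x) (φ y)) = Real.log (ρ x y) -
      (Real.log (ρ x (φ x)) - Real.log (ρ y (φ y))) := by
    linarith [hρ.log_eq_add (hφE x) hφxy, hρ.log_eq_add hxy (hφE y)]
  rw [hdist]
  linarith [abs_sub (Real.log (ρ x y)) (Real.log (ρ x (φ x)) - Real.log (ρ y (φ y))),
    abs_sub_lt_of_floor_div_eq (half_pos hδ) hfloor]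

end Smoothness

lemma avgOn_eq_sum_div (ρ : X → X → ℝ) (f : X → ℝ) {S C : Set X} {T : Finset X} (hT : S ∩ C = T)
    (z : X) : avgOn ρ f S C z = (∑ y ∈ T, f y * ρ y z) / rSize ρ S z := by
  rw [avgOn, hT, Finset.tsum_subtype' T fun y => f y * ρ y z]

lemma IsBalanced.avgOn_le {ρ : X → X → ℝ} {f g : X → ℝ} {r : ℝ} {x : X} {C D : Finset X}
    (h : IsBalanced r (fun z => f z * ρ z x) (fun z => g z * ρ z x) C D) {S M N : Set X}
    (hM : S ∩ M = C) (hN : S ∩ N = D) (hS : 0 ≤ rSize ρ S x) :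
    avgOn ρ f S M x ≤ avgOn ρ g S N x ∧ avgOn ρ g S N x ≤ r * avgOn ρ f S M x := by
  rw [avgOn_eq_sum_div ρ f hM, avgOn_eq_sum_div ρ g hN, ← mul_div_assoc]
  exact ⟨div_le_div_of_nonneg_right h.sum_le_sum hS, div_le_div_of_nonneg_right h.sum_le_mul_sum hS⟩

/-- Second approximation lemma for cocycles: given Borel `f, g : X → [0,∞)` and `r > 1`,
there are an `E`-invariant Borel set `B`, a Borel set `C ⊆ B`, and a finite Borel
subequivalence relation `F` of `E ↾ B` such that `ρ ↾ (E ↾ Bᶜ)` is smooth and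
`∫_C f dμ^ρ_{[x]_F} ≤ ∫_{B∖C} g dμ^ρ_{[x]_F} ≤ r·∫_C f dμ^ρ_{[x]_F}` for all `x ∈ B`. -/
theorem stmt19 [MeasurableSpace X] [StandardBorelSpace X]
    (E : X → X → Prop) (hE : IsCBER E)
    (ρ : X → X → ℝ) (hρ : IsCocycle E ρ)
    (f g : X → ℝ) (hf : Measurable f) (hf0 : ∀ x, 0 ≤ f x)
    (hg : Measurable g) (hg0 : ∀ x, 0 ≤ g x) (r : ℝ) (hr : 1 < r) :
    ∃ B C : Set X, MeasurableSet B ∧ EInvariant E B ∧ MeasurableSet C ∧ C ⊆ B ∧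
      ∃ F : X → X → Prop, IsFinSubequivOn E B F ∧
        SmoothOn E ρ Bᶜ ∧
        ∀ x ∈ B,
          avgOn ρ f {z | F z x} C x ≤ avgOn ρ g {z | F z x} (B \ C) x ∧
          avgOn ρ g {z | F z x} (B \ C) x ≤ r * avgOn ρ f {z | F z x} C x := by
  obtain ⟨T, C, D, hT, hfamily, hpair⟩ := exists_isBorelPairFamily_isBalancedPair hE hρ hf hg r
  have := hT.standardBorel
  obtain ⟨Y, M, F, hY, hM, hMB, hF, hmeet, hclass⟩ := hfamily.exists_isFinSubequivOn hE
  have hYsmooth : SmoothOn E ρ Y := by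
    refine smoothOn_of_forall_isBalancedPair hE hρ hf hf0 hg hg0 hr hY fun C' D' hCD => ?_
    obtain ⟨k, rfl, rfl⟩ := (hpair C' D').1 hCD
    obtain ⟨_, _, hbal⟩ := hCD
    exact hmeet k hbal.nonempty
  refine ⟨(saturation E Y)ᶜ, M, (measurableSet_saturation hE hY).compl,
    eInvariant_compl_saturation hE.1 Y, hM, hMB, F, hF, ?_, fun x hx => ?_⟩
  · rw [compl_compl]
    exact hYsmooth.saturation hE hρ hY
  · obtain ⟨k, hxk, hC, hD⟩ := hclass x hx
    have hbal := ((hpair _ _).2 ⟨k, rfl, rfl⟩).isBalanced hE.1 hρ hxk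
    exact hbal.avgOn_le hC hD (tsum_nonneg fun y => (hρ.2.1 (hF.rel hE.1 y.2)).le)

end CocycleNadkarni
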